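/- Let H be a left Noetherian Laurentian graded algebra over a field k with property (♠), and let {L(π) | π ∈ Π} be a complete and irredundant set of simple modules in H-gmod up to isomorphism and grading shift. Then: (1) the set of completions {L(π)^∧ | π ∈ Π} is a complete set of isomorphism classes of simple modules in Ĥ-mof; (2) for each π ∈ Π, the completion P(π)^∧ of the projective cover P(π) of L(π) is a projective cover of L(π)^∧ in Ĥ-mof. -/

import Mathlib

/-!
Elements of `Ĥ` and `V̂` are handled through their homogeneous coordinates, which multiply by
convolution. Write `Ĥ_{≥m}` for the elements whose coordinates in degrees `< m` vanish.

*High degree lies in the radical.* Since `H` is bounded below, for `x ∈ Ĥ_{≥m}` with `m` large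
every multiple `yx` has positive degree, so `1 - yx` is left invertible by a geometric series.
Hence `x` annihilates every simple `Ĥ`-module (`GCompl.smul_eq_zero_of_simple`).

*Completions of graded simples are simple.* A graded simple `L` is generated by any nonzero
homogeneous vector, so it is supported in finitely many degrees (`GCompl.exists_upper`). For a
nonzero submodule of `L̂` the lowest coordinates of its elements form a nonzero graded submodule
of `L`, that is all of `L`, and descending induction on degree concludes (`GCompl.simple_hat`).
A nonzero map `L̂ → L̂'` has a nonzero homogeneous component, which is an isomorphism `L → L'` up
to shift (`GCompl.giso_of_hat_equiv`).

*Every simple arises.* For a vector `u` of a simple `Ĥ`-module `S`, let `gann u` be the largest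
graded left ideal of `H` killing `u`. It contains `H_{≥m}` for large `m`, so it has finite
codimension, and a minimality argument produces a nonzero `u` for which `H / gann u` is graded
simple (`GCompl.exists_simple_gann`). Comparing annihilators of generators in `Ĥ` identifies `S`
with the completion of that module (`GCompl.equiv_of_giso`).

*Projective covers.* Splitting a surjection from a graded free module gives a homogeneous dual
basis of `P`, whose completion is a dual basis of `P̂`. So `P̂` is finitely generated projective,
and maps from it to simple modules are continuous. If a proper submodule supplemented the kernel
of `P̂ → L̂`, some map `f` from `P̂` to a completed graded simple would be nonzero on this kernel;
but the homogeneous components of `f` are zero or surjective, so they vanish on the superfluous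
kernel of `P → L`, and by continuity `f` vanishes on its completion (`GCompl.hat_essential`).
-/

open CategoryTheory

/-! ## Graded algebras (Laurentian) and the category `H`-gmod -/

/-- A `ℤ`-graded `k`-algebra. -/
structure GAlg (k : Type) [Field k] : Type 1 where
  carrier : Type
  [ring : Ring carrier]
  [alg : Algebra k carrier]
  grading : ℤ → Submodule k carrier
  internal : DirectSum.IsInternal grading
  one_mem : (1 : carrier) ∈ grading 0
  mul_mem : ∀ {i j : ℤ} {a b : carrier},
    a ∈ grading i → b ∈ grading j → a * b ∈ grading (i + j)

attribute [instance] GAlg.ring GAlg.alg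

variable {k : Type} [Field k]

namespace GAlg

/-- A graded algebra is Laurentian if the grading is bounded below and has
finite-dimensional components. -/
def Laurentian (A : GAlg k) : Prop :=
  (∃ N : ℤ, ∀ n : ℤ, n < N → A.grading n = ⊥) ∧
    ∀ n : ℤ, FiniteDimensional k (A.grading n)

/-- Property `(♠)`: there is a central `ℤ≥0`-graded subalgebra `Z ⊆ H_{≥0}` with
`Z₀ = k·1` such that `H` is finitely generated as a `Z`-module. -/
def Spade (A : GAlg k) : Prop :=
  ∃ Z : ℤ → Submodule k A.carrier,
    (∀ n, Z n ≤ A.grading n) ∧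
    (∀ n : ℤ, n < 0 → Z n = ⊥) ∧
    (Z 0 = Submodule.span k {(1 : A.carrier)}) ∧
    (∀ (i j : ℤ) (a b : A.carrier), a ∈ Z i → b ∈ Z j → a * b ∈ Z (i + j)) ∧
    (∀ (i : ℤ) (a : A.carrier), a ∈ Z i → ∀ h : A.carrier, a * h = h * a) ∧
    (∃ s : Finset A.carrier,
      AddSubgroup.closure
        {x : A.carrier | ∃ i : ℤ, ∃ z ∈ Z i, ∃ t ∈ s, x = z * t} = ⊤)

end GAlg

/-- A finitely generated graded module over a graded algebra. -/
structure GMod (A : GAlg k) : Type 1 where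
  carrier : Type
  [acg : AddCommGroup carrier]
  [mod : Module A.carrier carrier]
  [kmod : Module k carrier]
  [tower : IsScalarTower k A.carrier carrier]
  [scc : SMulCommClass k A.carrier carrier]
  grading : ℤ → Submodule k carrier
  internal : DirectSum.IsInternal grading
  smul_mem : ∀ {i j : ℤ} {a : A.carrier} {x : carrier},
    a ∈ A.grading i → x ∈ grading j → a • x ∈ grading (i + j)
  fg : Module.Finite A.carrier carrier

attribute [instance] GMod.acg GMod.mod GMod.kmod GMod.tower GMod.scc

variable {A : GAlg k}

/-- The category `H`-gmod : morphisms are degree-preserving `H`-linear maps. -/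
instance GMod.instCategory : Category (GMod A) where
  Hom M N := {f : M.carrier →ₗ[A.carrier] N.carrier //
    ∀ (i : ℤ) (x : M.carrier), x ∈ M.grading i → f x ∈ N.grading i}
  id M := ⟨LinearMap.id, fun _ _ h => h⟩
  comp f g := ⟨g.1.comp f.1, fun i x h => g.2 i _ (f.2 i x h)⟩
  id_comp f := Subtype.ext (LinearMap.ext fun _ => rfl)
  comp_id f := Subtype.ext (LinearMap.ext fun _ => rfl)
  assoc f g h := Subtype.ext (LinearMap.ext fun _ => rfl)

/-- The grading shift `q^n`. -/
def GMod.shift (n : ℤ) (M : GMod A) : GMod A where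
  carrier := M.carrier
  grading := fun i => M.grading (i - n)
  internal := by
    have h := (DirectSum.isInternal_submodule_iff_iSupIndep_and_iSup_eq_top
      M.grading).mp M.internal
    rw [DirectSum.isInternal_submodule_iff_iSupIndep_and_iSup_eq_top]
    refine ⟨h.1.comp (f := fun i : ℤ => i - n)
      (fun a b hab => by simp only [] at hab; omega), ?_⟩
    refine le_antisymm le_top ?_
    rw [← h.2]
    refine iSup_le fun i => ?_
    have hg : M.grading i = M.grading ((i + n) - n) := by norm_num
    rw [hg]
    exact le_iSup (fun j : ℤ => M.grading (j - n)) (i + n)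
  smul_mem := fun {i j a x} ha hx => by
    have h := M.smul_mem ha hx
    have : i + (j - n) = (i + j) - n := by ring
    simpa [this] using h
  fg := M.fg

/-- The grading shift as a (graded) functor. -/
def shiftF (A : GAlg k) (n : ℤ) : GMod A ⥤ GMod A where
  obj M := GMod.shift n M
  map f := ⟨f.1, fun i x h => f.2 (i - n) x h⟩

/-- Isomorphism in `H`-gmod, concretely. -/
structure GIso (M N : GMod A) where
  e : M.carrier ≃ₗ[A.carrier] N.carrier
  mem : ∀ (i : ℤ) (x : M.carrier), x ∈ M.grading i → e x ∈ N.grading i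
  mem' : ∀ (i : ℤ) (y : N.carrier), y ∈ N.grading i → e.symm y ∈ M.grading i

/-- A graded (homogeneous) submodule. -/
def GMod.IsGSub (M : GMod A) (W : Submodule A.carrier M.carrier) : Prop :=
  W.restrictScalars k = ⨆ i : ℤ, (W.restrictScalars k ⊓ M.grading i)

/-- The subquotient `W/W'` of a graded module. -/
abbrev sqMod (M : GMod A) (W W' : Submodule A.carrier M.carrier) : Type :=
  W ⧸ (W'.comap W.subtype)

/-- The induced grading on a subquotient. -/
abbrev sqGrading (M : GMod A) (W W' : Submodule A.carrier M.carrier) (i : ℤ) :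
    Submodule k (sqMod M W W') :=
  ((M.grading i).comap ((W.subtype).restrictScalars k)).map
    (((W'.comap W.subtype).mkQ).restrictScalars k)

/-- The subquotient `W/W'` is isomorphic, as a graded module, to `N`. -/
def SQIso (M : GMod A) (W W' : Submodule A.carrier M.carrier) (N : GMod A) : Prop :=
  ∃ e : (sqMod M W W') ≃ₗ[A.carrier] N.carrier,
    ∀ i : ℤ, (sqGrading M W W' i).map
      ((e : sqMod M W W' →ₗ[A.carrier] N.carrier).restrictScalars k) = N.grading i

/-- A separated filtration by graded submodules. -/
structure GFilt (M : GMod A) where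
  F : ℕ → Submodule A.carrier M.carrier
  first : F 0 = ⊤
  anti : ∀ n, F (n + 1) ≤ F n
  graded : ∀ n, M.IsGSub (F n)
  separated : ∀ x : M.carrier, (∀ n, x ∈ F n) → x = 0

/-- The filtration `Φ` has all subquotients zero or of the form `q^d N` with
`N` in the family `S`. -/
def FiltBy (M : GMod A) (Φ : GFilt M) (S : Set (GMod A)) : Prop :=
  ∀ n : ℕ, Subsingleton (sqMod M (Φ.F n) (Φ.F (n + 1))) ∨
    ∃ N ∈ S, ∃ d : ℤ, SQIso M (Φ.F n) (Φ.F (n + 1)) (GMod.shift d N)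

/-- Homogeneous (degree `d`) `H`-linear maps. -/
def ghomSet (M N : GMod A) (d : ℤ) : Set (M.carrier →ₗ[A.carrier] N.carrier) :=
  {f | ∀ (i : ℤ) (x : M.carrier), x ∈ M.grading i → f x ∈ N.grading (i + d)}

/-- Homogeneous degree `d` maps as a `k`-submodule of all `H`-linear maps. -/
def ghomSub (M N : GMod A) (d : ℤ) :
    Submodule k (M.carrier →ₗ[A.carrier] N.carrier) where
  carrier := ghomSet M N d
  add_mem' := fun hf hg i x hx => (N.grading (i + d)).add_mem (hf i x hx) (hg i x hx)
  zero_mem' := fun i x _ => (N.grading (i + d)).zero_mem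
  smul_mem' := fun c f hf i x hx => by
    simpa using (N.grading (i + d)).smul_mem c (hf i x hx)

/-- A graded-simple module. -/
def IsGSimple (M : GMod A) : Prop :=
  Nontrivial M.carrier ∧
    ∀ W : Submodule A.carrier M.carrier, M.IsGSub W → W = ⊥ ∨ W = ⊤

/-- Graded projectivity. -/
def GProjective (P : GMod A) : Prop :=
  ∀ (M N : GMod A) (g : M ⟶ N) (h : P ⟶ N),
    Function.Surjective g.1 → ∃ l : P ⟶ M, l ≫ g = h

/-- Vanishing of all (graded) `ext¹` groups `ext¹(U, V) = ⊕ₙ Ext¹(qⁿU, V) = 0`: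
every extension of a shift of `U` by `V` splits. -/
def Ext1Vanish (U V : GMod A) : Prop :=
  ∀ (n : ℤ) (E : GMod A) (f : V ⟶ E) (g : E ⟶ GMod.shift n U),
    Function.Injective f.1 → Function.Surjective g.1 →
    LinearMap.range f.1 = LinearMap.ker g.1 →
    ∃ s : GMod.shift n U ⟶ E, s ≫ g = 𝟙 (GMod.shift n U)

/-- The structure of an affine highest weight category on `H`-gmod, i.e. an
affine quasi-hereditary structure on `H` (Kleshchev).  The proper costandard
objects are axiomatised through their homological characterisation. -/
structure AHW (A : GAlg k) (Idx : Type) [Fintype Idx] [PartialOrder Idx] :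
    Type 1 where
  /-- simple objects -/
  L : Idx → GMod A
  /-- projective covers -/
  P : Idx → GMod A
  /-- standard objects -/
  Δ : Idx → GMod A
  /-- proper costandard objects -/
  pco : Idx → GMod A
  noeth : IsNoetherianRing A.carrier
  laur : A.Laurentian
  simple : ∀ π, IsGSimple (L π)
  simple_complete : ∀ S : GMod A, IsGSimple S →
    ∃ (π : Idx) (d : ℤ), Nonempty (GIso S (GMod.shift d (L π)))
  simple_irred : ∀ (π σ : Idx) (d : ℤ),
    Nonempty (GIso (L π) (GMod.shift d (L σ))) → π = σ
  proj : ∀ π, GProjective (P π)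
  cover : ∀ π, ∃ p : P π ⟶ L π, Function.Surjective p.1 ∧
    ∀ W : Submodule A.carrier (P π).carrier, (P π).IsGSub W →
      W ⊔ LinearMap.ker p.1 = ⊤ → W = ⊤
  /-- `Δ(π) = P(π)/(Σ images of graded maps from P(σ), σ ≰ π)` -/
  std_def : ∀ π, ∃ dm : P π ⟶ Δ π, Function.Surjective dm.1 ∧
    LinearMap.ker dm.1 =
      ⨆ (p : Σ σ : Idx, (P σ).carrier →ₗ[A.carrier] (P π).carrier)
        (_ : ¬ p.1 ≤ π) (_ : ∃ d, p.2 ∈ ghomSet (P p.1) (P π) d),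
          LinearMap.range p.2
  /-- the kernel of `P(π) ↠ Δ(π)` is filtered by shifts of `Δ(σ)`, `σ > π` -/
  ker_filt : ∀ π, ∃ Φ : GFilt (P π), (∃ N, Φ.F N = ⊥) ∧
    SQIso (P π) (Φ.F 0) (Φ.F 1) (Δ π) ∧
    ∀ n : ℕ, 1 ≤ n →
      (Subsingleton (sqMod (P π) (Φ.F n) (Φ.F (n + 1))) ∨
        ∃ σ : Idx, π < σ ∧ ∃ d : ℤ,
          SQIso (P π) (Φ.F n) (Φ.F (n + 1)) (GMod.shift d (Δ σ)))
  /-- `B_π = end(Δ(π))` is a graded polynomial ring on homogeneous generators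
  of positive degree -/
  end_poly : ∀ π, ∃ (nv : ℕ) (dg : Fin nv → ℤ),
    (∀ i, 0 < dg i) ∧
    ∃ e : MvPolynomial (Fin nv) k →ₐ[k] Module.End A.carrier (Δ π).carrier,
      Function.Bijective e ∧
      ∀ i, (e (MvPolynomial.X i) :
        (Δ π).carrier →ₗ[A.carrier] (Δ π).carrier) ∈ ghomSet (Δ π) (Δ π) (dg i)
  /-- `hom(P(π), Δ(σ))` is a graded free `B_σ`-module of finite rank -/
  hom_free : ∀ π σ, ∃ (mr : ℕ)
    (b : Fin mr → ((P π).carrier →ₗ[A.carrier] (Δ σ).carrier))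
    (db : Fin mr → ℤ),
    (∀ i, b i ∈ ghomSet (P π) (Δ σ) (db i)) ∧
    Function.Bijective (fun c : Fin mr → Module.End A.carrier (Δ σ).carrier =>
      ∑ i, LinearMap.comp (c i : (Δ σ).carrier →ₗ[A.carrier] (Δ σ).carrier) (b i))
  /-- the proper costandard objects have finite length … -/
  pco_finlen : ∀ π, IsFiniteLength A.carrier (pco π).carrier
  /-- … and satisfy `hom(Δ(σ), ∇̄(π)) = δ_{σπ} k` concentrated in degree 0 … -/
  pco_hom : ∀ π, ∃ f₀ : (Δ π).carrier →ₗ[A.carrier] (pco π).carrier,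
    f₀ ∈ ghomSet (Δ π) (pco π) 0 ∧ f₀ ≠ 0 ∧
    (∀ (d : ℤ) (f : (Δ π).carrier →ₗ[A.carrier] (pco π).carrier),
      f ∈ ghomSet (Δ π) (pco π) d → ∃ c : k, f = c • f₀) ∧
    ∀ (σ : Idx) (d : ℤ) (f : (Δ σ).carrier →ₗ[A.carrier] (pco π).carrier),
      f ∈ ghomSet (Δ σ) (pco π) d → σ ≠ π → f = 0
  /-- … and `ext¹(Δ(σ), ∇̄(π)) = 0` -/
  pco_ext : ∀ π σ, Ext1Vanish (Δ σ) (pco π)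

variable {Idx : Type} [Fintype Idx] [PartialOrder Idx]

/-- `V` has a `Δ`-filtration. -/
def HasDFilt (S : AHW A Idx) (M : GMod A) : Prop :=
  ∃ Φ : GFilt M, FiltBy M Φ (Set.range S.Δ)

/-- `V` has a `∇̄`-filtration. -/
def HasPCFilt (S : AHW A Idx) (M : GMod A) : Prop :=
  ∃ Φ : GFilt M, FiltBy M Φ (Set.range S.pco)

/-- Tilting modules. -/
def IsTilting (S : AHW A Idx) (M : GMod A) : Prop :=
  HasDFilt S M ∧ HasPCFilt S M

/-- The multiplicity `(V : Δ(π))` of `Δ(π)` in a given `Δ`-filtration. -/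
noncomputable def dMult (S : AHW A Idx) {M : GMod A} (Φ : GFilt M) (π : Idx) : ℕ :=
  Set.ncard {n : ℕ | ∃ d : ℤ,
    SQIso M (Φ.F n) (Φ.F (n + 1)) (GMod.shift d (S.Δ π))}

/-- `V` admits a (finite) `Δ`-filtration with `(V:Δ(π)) = 1` and `(V:Δ(σ)) = 0`
for `σ ≰ π`. -/
def MultCond (S : AHW A Idx) (M : GMod A) (π : Idx) : Prop :=
  ∃ Φ : GFilt M, FiltBy M Φ (Set.range S.Δ) ∧ (∃ N, Φ.F N = ⊥) ∧
    dMult S Φ π = 1 ∧ ∀ σ : Idx, ¬ σ ≤ π → dMult S Φ σ = 0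

/-- Indecomposability (no nontrivial graded idempotent endomorphism). -/
def Indec (M : GMod A) : Prop :=
  Nontrivial M.carrier ∧
    ∀ e : M ⟶ M, e ≫ e = e → e.1 = 0 ∨ e.1 = LinearMap.id

/-- A short exact sequence in `H`-gmod. -/
def SES {X Y Z : GMod A} (f : X ⟶ Y) (g : Y ⟶ Z) : Prop :=
  Function.Injective f.1 ∧ Function.Surjective g.1 ∧
    LinearMap.range f.1 = LinearMap.ker g.1

/-! ## Formal completion of Laurentian graded algebras and modules -/

section Hat

variable {k : Type} [Field k]

/-- Data exhibiting the formal completion `Ĥ = ∏ₙ Hₙ` of a Laurentian graded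
algebra `H`, with its convolution multiplication. -/
structure HatAlg (A : GAlg k) : Type 1 where
  Hh : Type
  [ring : Ring Hh]
  [alg : Algebra k Hh]
  ι : A.carrier →ₐ[k] Hh
  E : Hh ≃ₗ[k] ((n : ℤ) → A.grading n)
  bound : ℤ
  bound_spec : ∀ n : ℤ, n < bound → A.grading n = ⊥
  ι_single : ∀ (n : ℤ) (a : A.grading n), E (ι a) = Pi.single n a
  mul_coord : ∀ (x y : Hh) (n : ℤ),
    ((E (x * y) n : A.carrier)) =
      ∑ i ∈ Finset.Icc bound (n - bound),
        ((E x i : A.carrier) * (E y (n - i) : A.carrier))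

attribute [instance] HatAlg.ring HatAlg.alg

/-- Data exhibiting the formal completion `V̂ = ∏ₙ Vₙ` of a finitely generated
graded module, as a module over the completed algebra `Ĥ`. -/
structure HatMod {A : GAlg k} (HA : HatAlg A) (M : GMod A) : Type 1 where
  Vh : Type
  [acg : AddCommGroup Vh]
  [mod : Module HA.Hh Vh]
  [kmod : Module k Vh]
  [tower : IsScalarTower k HA.Hh Vh]
  EV : Vh ≃ₗ[k] ((n : ℤ) → M.grading n)
  bound : ℤ
  bound_spec : ∀ n : ℤ, n < bound → M.grading n = ⊥
  smul_coord : ∀ (x : HA.Hh) (v : Vh) (n : ℤ),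
    ((EV (x • v) n : M.carrier)) =
      ∑ i ∈ Finset.Icc HA.bound (n - bound),
        ((HA.E x i : A.carrier) • (EV v (n - i) : M.carrier))

attribute [instance] HatMod.acg HatMod.mod HatMod.kmod HatMod.tower

/-- Powers of a (left) ideal, as left submodules. -/
def idealPow {B : Type} [Ring B] (I : Submodule B B) : ℕ → Submodule B B
  | 0 => ⊤
  | n + 1 => Submodule.span B {x : B | ∃ a ∈ idealPow I n, ∃ b ∈ I, x = a * b}

variable {A : GAlg k}

/-- The maximal ideal `m̂ = mĤ` of the completion, attached to the central
subalgebra datum `Z` from property `(♠)`. -/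
def hatMaxIdeal (HA : HatAlg A) (Z : ℤ → Submodule k A.carrier) :
    Submodule HA.Hh HA.Hh :=
  Submodule.span HA.Hh (HA.ι '' {a : A.carrier | ∃ n : ℤ, 0 < n ∧ a ∈ Z n})

/-- `mⁿ·V` for a graded module `V`. -/
def mPowSmul (Z : ℤ → Submodule k A.carrier) (V : GMod A) :
    ℕ → Submodule A.carrier V.carrier
  | 0 => ⊤
  | n + 1 => Submodule.span A.carrier
      {x : V.carrier | ∃ a : A.carrier, (∃ m : ℤ, 0 < m ∧ a ∈ Z m) ∧
        ∃ v ∈ mPowSmul Z V n, x = a • v}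

lemma mPowSmul_succ_le (Z : ℤ → Submodule k A.carrier) (V : GMod A) (n : ℕ) :
    mPowSmul Z V (n + 1) ≤ mPowSmul Z V n := by
  have h : mPowSmul Z V (n + 1) = Submodule.span A.carrier
      {x : V.carrier | ∃ a : A.carrier, (∃ m : ℤ, 0 < m ∧ a ∈ Z m) ∧
        ∃ v ∈ mPowSmul Z V n, x = a • v} := rfl
  rw [h]
  refine Submodule.span_le.mpr ?_
  rintro x ⟨a, _, v, hv, rfl⟩
  exact Submodule.smul_mem _ a hv

/-- The inverse limit `lim V/mⁿV`, realized inside `∏ₙ V/mⁿV`. -/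
def limMod (Z : ℤ → Submodule k A.carrier) (V : GMod A) :
    Submodule A.carrier ((n : ℕ) → (V.carrier ⧸ mPowSmul Z V n)) :=
  ⨅ n : ℕ, LinearMap.ker
    ((Submodule.mapQ (mPowSmul Z V (n + 1)) (mPowSmul Z V n) LinearMap.id
        (mPowSmul_succ_le Z V n)).comp
      (LinearMap.proj (R := A.carrier)
        (φ := fun m : ℕ => V.carrier ⧸ mPowSmul Z V m) (n + 1)) -
      LinearMap.proj (R := A.carrier)
        (φ := fun m : ℕ => V.carrier ⧸ mPowSmul Z V m) n)

end Hat

namespace GCompl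

/-! ### Projections of an internal grading -/

section Projections

variable {V : Type} [AddCommGroup V] [Module k V] {G : ℤ → Submodule k V}

/-- The decomposition of an internally graded vector space as a direct sum. -/
noncomputable def dec (h : DirectSum.IsInternal G) : V ≃ₗ[k] DirectSum ℤ (fun i => G i) :=
  (LinearEquiv.ofBijective (DirectSum.coeLinearMap G) (by exact h)).symm

lemma dec_of_mem (h : DirectSum.IsInternal G) {j : ℤ} {x : V} (hx : x ∈ G j) :
    dec h x = DirectSum.lof k ℤ (fun i => G i) j ⟨x, hx⟩ := by
  rw [dec, LinearEquiv.symm_apply_eq]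
  exact (DirectSum.coeLinearMap_lof G j ⟨x, hx⟩).symm

/-- The projection of an internally graded vector space onto its component of degree `i`,
viewed as an endomorphism of the whole space. -/
noncomputable def pr (h : DirectSum.IsInternal G) (i : ℤ) : V →ₗ[k] V :=
  (G i).subtype ∘ₗ DirectSum.component k ℤ (fun i => G i) i ∘ₗ (dec h).toLinearMap

lemma pr_mem (h : DirectSum.IsInternal G) (i : ℤ) (x : V) : pr h i x ∈ G i :=
  Subtype.property _

lemma pr_same (h : DirectSum.IsInternal G) {i : ℤ} {x : V} (hx : x ∈ G i) :
    pr h i x = x := by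
  simp only [pr, LinearMap.comp_apply, LinearEquiv.coe_coe]
  rw [dec_of_mem h hx, DirectSum.component.lof_self]
  simp

lemma pr_ne (h : DirectSum.IsInternal G) {i j : ℤ} {x : V} (hx : x ∈ G j) (hij : j ≠ i) :
    pr h i x = 0 := by
  simp only [pr, LinearMap.comp_apply, LinearEquiv.coe_coe]
  rw [dec_of_mem h hx, DirectSum.component.of, dif_neg hij]
  simp

/-- Homogeneous elements span, in the form of an induction principle. -/
@[elab_as_elim]
lemma hom_induction (h : DirectSum.IsInternal G) {p : V → Prop} (x : V) (h0 : p 0)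
    (hadd : ∀ x y, p x → p y → p (x + y)) (hh : ∀ i, ∀ x ∈ G i, p x) : p x := by
  have ht : x ∈ ⨆ i, G i := by
    rw [h.submodule_iSup_eq_top]; trivial
  exact Submodule.iSup_induction (motive := p) G ht hh h0 hadd

lemma exists_sum (h : DirectSum.IsInternal G) (x : V) :
    ∃ T : Finset ℤ, (∀ i ∉ T, pr h i x = 0) ∧ x = ∑ i ∈ T, pr h i x := by
  classical
  have key : ∀ x : V, ∃ T : Finset ℤ, (∀ i ∉ T, pr h i x = 0) ∧
      ∀ T', T ⊆ T' → x = ∑ i ∈ T', pr h i x := by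
    intro x
    refine hom_induction h x ⟨∅, by simp, by simp⟩ ?_ ?_
    · rintro x y ⟨T, hT, hT'⟩ ⟨S, hS, hS'⟩
      refine ⟨T ∪ S, fun i hi => ?_, fun U hU => ?_⟩
      · simp only [Finset.mem_union, not_or] at hi
        simp [hT i hi.1, hS i hi.2]
      · simp only [map_add, Finset.sum_add_distrib]
        rw [← hT' U (Finset.union_subset_left hU), ← hS' U (Finset.union_subset_right hU)]
    · intro i x hx
      refine ⟨{i}, fun j hj => pr_ne h hx (by simpa [eq_comm] using hj), fun U hU => ?_⟩
      rw [Finset.sum_eq_single i, pr_same h hx]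
      · intro j _ hj
        exact pr_ne h hx hj.symm
      · intro hi
        exact absurd (hU (Finset.mem_singleton_self i)) hi
  obtain ⟨T, h1, h2⟩ := key x
  exact ⟨T, h1, h2 T le_rfl⟩

lemma pr_ext (h : DirectSum.IsInternal G) {x y : V} (hxy : ∀ i, pr h i x = pr h i y) :
    x = y := by
  rw [← sub_eq_zero]
  obtain ⟨T, -, hT⟩ := exists_sum h (x - y)
  rw [hT]
  exact Finset.sum_eq_zero fun i _ => by rw [map_sub, hxy, sub_self]

/-- A family of subspaces is an internal grading as soon as it admits a family of
projections that detects all vectors and has finite support at each vector. -/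
lemma isInternal_of_proj (c : ℤ → V →ₗ[k] V)
    (hsame : ∀ i, ∀ x ∈ G i, c i x = x) (hne : ∀ i j, i ≠ j → ∀ x ∈ G j, c i x = 0)
    (hsum : ∀ x, ∃ (T : Finset ℤ) (y : ℤ → V), (∀ i, y i ∈ G i) ∧ x = ∑ i ∈ T, y i) :
    DirectSum.IsInternal G := by
  classical
  rw [DirectSum.isInternal_submodule_iff_iSupIndep_and_iSup_eq_top]
  constructor
  · intro i
    rw [Submodule.disjoint_def]
    intro x hx hx'
    have h0 : (⨆ j, ⨆ (_ : j ≠ i), G j) ≤ LinearMap.ker (c i) :=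
      iSup₂_le fun j hj y hy => hne i j hj.symm y hy
    rw [← hsame i x hx]
    exact h0 hx'
  · rw [eq_top_iff]
    intro x _
    obtain ⟨T, y, hy, rfl⟩ := hsum x
    exact Submodule.sum_mem _ fun i _ => Submodule.mem_iSup_of_mem i (hy i)

end Projections

/-! ### Graded modules: homogeneous maps, graded submodules, quotients -/

lemma pr_smul (M : GMod A) {i : ℤ} {a : A.carrier} (ha : a ∈ A.grading i) (x : M.carrier)
    (n : ℤ) : pr M.internal n (a • x) = a • pr M.internal (n - i) x := by
  refine hom_induction M.internal x (by simp) (fun x y hx hy => ?_) (fun j x hx => ?_)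
  · rw [smul_add, map_add, hx, hy, map_add, smul_add]
  · by_cases hj : j = n - i
    · subst hj
      rw [pr_same _ hx, pr_same]
      simpa using M.smul_mem ha hx
    · rw [pr_ne _ hx hj, smul_zero]
      exact pr_ne _ (M.smul_mem ha hx) (by omega)

lemma pr_smul_right (M : GMod A) {j : ℤ} {x : M.carrier} (hx : x ∈ M.grading j)
    (a : A.carrier) (n : ℤ) :
    pr M.internal n (a • x) = pr A.internal (n - j) a • x := by
  refine hom_induction A.internal a (by simp) (fun a b hx hy => ?_) (fun i a ha => ?_)
  · rw [add_smul, map_add, hx, hy, map_add, add_smul]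
  · by_cases hj : i = n - j
    · subst hj
      rw [pr_same _ ha, pr_same]
      simpa using M.smul_mem ha hx
    · rw [pr_ne _ ha hj, zero_smul]
      exact pr_ne _ (M.smul_mem ha hx) (by omega)

lemma pr_map {M N : GMod A} {d : ℤ} {f : M.carrier →ₗ[A.carrier] N.carrier}
    (hf : f ∈ ghomSet M N d) (x : M.carrier) (n : ℤ) :
    pr N.internal (n + d) (f x) = f (pr M.internal n x) := by
  refine hom_induction M.internal x (by simp) (fun x y hx hy => ?_) (fun j x hx => ?_)
  · rw [map_add, map_add, hx, hy, map_add, map_add]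
  · by_cases hj : j = n
    · subst hj
      rw [pr_same _ hx, pr_same _ (hf _ _ hx)]
    · rw [pr_ne _ hx hj, map_zero]
      exact pr_ne _ (hf _ _ hx) (by omega)

lemma isGSub_iff (M : GMod A) (W : Submodule A.carrier M.carrier) :
    M.IsGSub W ↔ ∀ x ∈ W, ∀ i, pr M.internal i x ∈ W := by
  constructor
  · intro h x hx i
    have hx' : x ∈ ⨆ i : ℤ, (W.restrictScalars k ⊓ M.grading i) := by
      rw [GMod.IsGSub] at h
      rw [← h]; exact hx
    refine Submodule.iSup_induction (motive := fun x => pr M.internal i x ∈ W) _ hx' ?_ ?_ ?_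
    · rintro j y ⟨hy, hy'⟩
      by_cases hj : j = i
      · subst hj
        rw [pr_same _ hy']; exact hy
      · rw [pr_ne _ hy' hj]; exact W.zero_mem
    · simp
    · intro x y hx hy
      rw [map_add]; exact W.add_mem hx hy
  · intro h
    refine le_antisymm ?_ (iSup_le fun i => inf_le_left)
    intro x hx
    obtain ⟨T, -, hT⟩ := exists_sum M.internal x
    rw [hT]
    exact Submodule.sum_mem _ fun i _ =>
      Submodule.mem_iSup_of_mem i ⟨h x hx i, pr_mem _ _ _⟩

/-- The graded submodule of all vectors whose degree `i` component lies in `C i` for every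
`i`, where the family `C` is stable under the action of homogeneous elements. -/
noncomputable def gsub (M : GMod A) (C : ℤ → AddSubgroup M.carrier)
    (hC : ∀ i j, ∀ a ∈ A.grading i, ∀ x ∈ M.grading j, x ∈ C j → a • x ∈ C (i + j)) :
    Submodule A.carrier M.carrier where
  carrier := {x | ∀ i, pr M.internal i x ∈ C i}
  add_mem' hx hy i := by rw [map_add]; exact (C i).add_mem (hx i) (hy i)
  zero_mem' i := by rw [map_zero]; exact (C i).zero_mem
  smul_mem' a x hx := by
    refine hom_induction A.internal a ?_ ?_ ?_
    · intro i; simp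
    · intro a b ha hb i
      rw [add_smul, map_add]; exact (C i).add_mem (ha i) (hb i)
    · intro j a ha i
      rw [pr_smul M ha]
      have := hC j (i - j) a ha _ (pr_mem _ _ _) (hx (i - j))
      simpa using this

lemma mem_gsub {M : GMod A} {C : ℤ → AddSubgroup M.carrier} {hC} {x : M.carrier} :
    x ∈ gsub M C hC ↔ ∀ i, pr M.internal i x ∈ C i := Iff.rfl

lemma mem_gsub_of_mem {M : GMod A} {C : ℤ → AddSubgroup M.carrier} {hC} {i : ℤ}
    {x : M.carrier} (hx : x ∈ M.grading i) : x ∈ gsub M C hC ↔ x ∈ C i := by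
  rw [mem_gsub]
  constructor
  · intro h
    simpa [pr_same _ hx] using h i
  · intro h j
    by_cases hj : i = j
    · subst hj
      rwa [pr_same _ hx]
    · rw [pr_ne _ hx hj]; exact (C j).zero_mem

lemma gsub_isGSub {M : GMod A} {C : ℤ → AddSubgroup M.carrier} {hC} :
    M.IsGSub (gsub M C hC) := by
  rw [isGSub_iff]
  intro x hx i
  rw [mem_gsub_of_mem (pr_mem _ _ _)]
  exact hx i

lemma span_singleton_isGSub (M : GMod A) {j : ℤ} {x : M.carrier} (hx : x ∈ M.grading j) :
    M.IsGSub (Submodule.span A.carrier {x}) := by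
  rw [isGSub_iff]
  intro y hy i
  obtain ⟨a, rfl⟩ := Submodule.mem_span_singleton.1 hy
  rw [pr_smul_right M hx]
  exact Submodule.smul_mem _ _ (Submodule.mem_span_singleton_self x)

lemma ker_isGSub {M N : GMod A} {d : ℤ} {f : M.carrier →ₗ[A.carrier] N.carrier}
    (hf : f ∈ ghomSet M N d) : M.IsGSub (LinearMap.ker f) := by
  rw [isGSub_iff]
  intro x hx i
  rw [LinearMap.mem_ker] at hx ⊢
  rw [← pr_map hf, hx, map_zero]

lemma map_isGSub {M N : GMod A} {d : ℤ} {f : M.carrier →ₗ[A.carrier] N.carrier}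
    (hf : f ∈ ghomSet M N d) {W : Submodule A.carrier M.carrier} (hW : M.IsGSub W) :
    N.IsGSub (W.map f) := by
  rw [isGSub_iff] at *
  rintro _ ⟨x, hx, rfl⟩ i
  have := pr_map hf x (i - d)
  rw [sub_add_cancel] at this
  rw [this]
  exact ⟨_, hW x hx _, rfl⟩

lemma top_isGSub (M : GMod A) : M.IsGSub ⊤ := by
  rw [isGSub_iff]; intros; trivial

/-- The regular graded module. -/
abbrev reg (A : GAlg k) : GMod A where
  carrier := A.carrier
  grading := A.grading
  internal := A.internal
  smul_mem := fun ha hx => A.mul_mem ha hx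
  fg := inferInstance

/-- The quotient of a graded module by a graded submodule. -/
noncomputable def gquot (M : GMod A) (W : Submodule A.carrier M.carrier) (hW : M.IsGSub W) :
    GMod A where
  carrier := M.carrier ⧸ W
  grading := fun i => (M.grading i).map (W.mkQ.restrictScalars k)
  internal := by
    rw [isGSub_iff] at hW
    have hc : ∀ i, W.restrictScalars k ≤
        (W.restrictScalars k).comap (pr M.internal i) := fun i x hx => hW x hx i
    refine isInternal_of_proj
      (fun i => Submodule.mapQ (W.restrictScalars k) (W.restrictScalars k)
        (pr M.internal i) (hc i)) ?_ ?_ ?_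
    · rintro i _ ⟨x, hx, rfl⟩
      change (Submodule.mapQ (W.restrictScalars k) (W.restrictScalars k)
        (pr M.internal i) (hc i)) (Submodule.Quotient.mk x) = _
      rw [Submodule.mapQ_apply, pr_same _ hx]
      rfl
    · rintro i j hij _ ⟨x, hx, rfl⟩
      change (Submodule.mapQ (W.restrictScalars k) (W.restrictScalars k)
        (pr M.internal i) (hc i)) (Submodule.Quotient.mk x) = _
      rw [Submodule.mapQ_apply, pr_ne _ hx hij.symm]
      rfl
    · intro x
      obtain ⟨x, rfl⟩ := W.mkQ_surjective x
      obtain ⟨T, -, hT⟩ := exists_sum M.internal x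
      refine ⟨T, fun i => W.mkQ (pr M.internal i x),
        fun i => ⟨_, pr_mem _ _ _, rfl⟩, ?_⟩
      conv_lhs => rw [hT]
      rw [map_sum]
  smul_mem := by
    rintro i j a _ ha ⟨x, hx, rfl⟩
    exact ⟨a • x, M.smul_mem ha hx, rfl⟩
  fg := by
    have := M.fg
    infer_instance

/-! ### Coordinates on completions -/

section Coordinates

variable {HA : HatAlg A} {M N : GMod A}

/-- The degree `n` coordinate of an element of the completed module. -/
def cd (HM : HatMod HA M) (v : HM.Vh) (n : ℤ) : M.carrier := (HM.EV v n : M.carrier)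

/-- The degree `n` coordinate of an element of the completed algebra. -/
def ca (HA : HatAlg A) (x : HA.Hh) (n : ℤ) : A.carrier := (HA.E x n : A.carrier)

/-- The element of the completed module with prescribed homogeneous coordinates. -/
def mk (HM : HatMod HA M) (f : ℤ → M.carrier) (hf : ∀ n, f n ∈ M.grading n) : HM.Vh :=
  HM.EV.symm fun n => ⟨f n, hf n⟩

lemma cd_mem (HM : HatMod HA M) (v : HM.Vh) (n : ℤ) : cd HM v n ∈ M.grading n :=
  (HM.EV v n).2

lemma ca_mem (x : HA.Hh) (n : ℤ) : ca HA x n ∈ A.grading n := (HA.E x n).2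

@[simp] lemma cd_mk (HM : HatMod HA M) (f : ℤ → M.carrier) (hf) (n : ℤ) :
    cd HM (mk HM f hf) n = f n := by simp [cd, mk]

@[simp] lemma cd_add (HM : HatMod HA M) (v w : HM.Vh) (n : ℤ) :
    cd HM (v + w) n = cd HM v n + cd HM w n := by simp [cd]

@[simp] lemma cd_sub (HM : HatMod HA M) (v w : HM.Vh) (n : ℤ) :
    cd HM (v - w) n = cd HM v n - cd HM w n := by simp [cd]

@[simp] lemma cd_zero (HM : HatMod HA M) (n : ℤ) : cd HM 0 n = 0 := by simp [cd]

@[simp] lemma ca_zero (n : ℤ) : ca HA 0 n = 0 := by simp [ca]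

lemma cd_smul_k (HM : HatMod HA M) (c : k) (v : HM.Vh) (n : ℤ) :
    cd HM (c • v) n = c • cd HM v n := by simp [cd]

lemma cd_sum {ι : Type*} (HM : HatMod HA M) (T : Finset ι) (v : ι → HM.Vh) (n : ℤ) :
    cd HM (∑ i ∈ T, v i) n = ∑ i ∈ T, cd HM (v i) n := by
  classical
  induction T using Finset.induction_on with
  | empty => simp
  | insert a s ha ih => rw [Finset.sum_insert ha, Finset.sum_insert ha, cd_add, ih]

lemma cd_ext (HM : HatMod HA M) {v w : HM.Vh} (h : ∀ n, cd HM v n = cd HM w n) : v = w :=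
  HM.EV.injective (funext fun n => Subtype.ext (h n))

lemma cd_lt (HM : HatMod HA M) (v : HM.Vh) {n : ℤ} (h : n < HM.bound) : cd HM v n = 0 := by
  have := cd_mem HM v n
  rwa [HM.bound_spec n h, Submodule.mem_bot] at this

lemma ca_lt (x : HA.Hh) {n : ℤ} (h : n < HA.bound) : ca HA x n = 0 := by
  have := ca_mem x n
  rwa [HA.bound_spec n h, Submodule.mem_bot] at this

/-- The convolution formula holds with any finite set of degrees outside of which all the
terms vanish. -/
lemma cd_smul (HM : HatMod HA M) (x : HA.Hh) (v : HM.Vh) (n : ℤ) (T : Finset ℤ)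
    (hT : ∀ i ∉ T, ca HA x i • cd HM v (n - i) = 0) :
    cd HM (x • v) n = ∑ i ∈ T, ca HA x i • cd HM v (n - i) := by
  classical
  have h1 : cd HM (x • v) n =
      ∑ i ∈ Finset.Icc HA.bound (n - HM.bound), ca HA x i • cd HM v (n - i) :=
    HM.smul_coord x v n
  have h2 : ∀ i ∉ Finset.Icc HA.bound (n - HM.bound), ca HA x i • cd HM v (n - i) = 0 := by
    intro i hi
    rw [Finset.mem_Icc, not_and_or, not_le, not_le] at hi
    rcases hi with hi | hi
    · rw [ca_lt x hi, zero_smul]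
    · rw [cd_lt HM v (by omega), smul_zero]
  rw [h1, Finset.sum_subset (Finset.subset_union_left (s₂ := T)) fun i _ hi => h2 i hi,
    Finset.sum_subset (Finset.subset_union_right (s₁ := Finset.Icc HA.bound (n - HM.bound)))
      fun i _ hi => hT i hi]

/-- The completed algebra as the completion of the regular graded module. -/
abbrev hatReg (HA : HatAlg A) : HatMod HA (reg A) where
  Vh := HA.Hh
  EV := HA.E
  bound := HA.bound
  bound_spec := HA.bound_spec
  smul_coord := HA.mul_coord

lemma ca_ι (a : A.carrier) (n : ℤ) : ca HA (HA.ι a) n = pr A.internal n a := by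
  have hadd : ∀ x y : A.carrier,
      ca HA (HA.ι (x + y)) n = ca HA (HA.ι x) n + ca HA (HA.ι y) n := by
    intro x y; simp [ca]
  refine hom_induction A.internal a (by simp) (fun x y hx hy => ?_) (fun i x hx => ?_)
  · rw [hadd, hx, hy, map_add]
  · rw [ca, HA.ι_single i ⟨x, hx⟩]
    by_cases h : i = n
    · subst h
      rw [pr_same _ hx]; simp
    · rw [pr_ne _ hx h, Pi.single_eq_of_ne (Ne.symm h)]; simp

lemma cd_ι_smul (HM : HatMod HA M) {i : ℤ} {a : A.carrier} (ha : a ∈ A.grading i)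
    (v : HM.Vh) (n : ℤ) : cd HM (HA.ι a • v) n = a • cd HM v (n - i) := by
  rw [cd_smul HM _ v n {i}]
  · simp [ca_ι, pr_same _ ha]
  · intro j hj
    rw [ca_ι, pr_ne _ ha (by simpa [eq_comm] using hj), zero_smul]

/-- The elements of the completed module whose coordinates in degrees `< m` vanish. -/
def InFil (HM : HatMod HA M) (m : ℤ) (v : HM.Vh) : Prop := ∀ n < m, cd HM v n = 0

lemma inFil_bound (HM : HatMod HA M) (v : HM.Vh) : InFil HM HM.bound v :=
  fun _ hn => cd_lt HM v hn

lemma InFil.mono {HM : HatMod HA M} {m m' : ℤ} {v : HM.Vh} (h : InFil HM m v)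
    (hm : m' ≤ m) : InFil HM m' v := fun n hn => h n (by omega)

lemma InFil.smul {HM : HatMod HA M} {a b : ℤ} {x : HA.Hh} {v : HM.Vh}
    (hx : InFil (hatReg HA) a x) (hv : InFil HM b v) : InFil HM (a + b) (x • v) := by
  intro n hn
  rw [cd_smul HM x v n ∅]
  · simp
  · intro i _
    by_cases hi : i < a
    · have : ca HA x i = 0 := hx i hi
      rw [this, zero_smul]
    · rw [hv (n - i) (by omega), smul_zero]

/-- The inclusion of the homogeneous component of degree `i` into the completion, extended to
the whole module by projecting first. -/
noncomputable def single (HM : HatMod HA M) (i : ℤ) : M.carrier →ₗ[k] HM.Vh where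
  toFun x := mk HM (fun n => if n = i then pr M.internal n x else 0) (fun n => by
    split_ifs
    · exact pr_mem _ _ _
    · exact Submodule.zero_mem _)
  map_add' x y := cd_ext HM fun n => by
    rw [cd_add, cd_mk, cd_mk, cd_mk]; split_ifs <;> simp
  map_smul' c x := cd_ext HM fun n => by
    rw [RingHom.id_apply, cd_smul_k, cd_mk, cd_mk]; split_ifs <;> simp

lemma cd_single (HM : HatMod HA M) (i : ℤ) (x : M.carrier) (n : ℤ) :
    cd HM (single HM i x) n = if n = i then pr M.internal n x else 0 := cd_mk _ _ _ _

lemma cd_single_of_mem (HM : HatMod HA M) {i : ℤ} {x : M.carrier} (hx : x ∈ M.grading i)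
    (n : ℤ) : cd HM (single HM i x) n = if n = i then x else 0 := by
  rw [cd_single]
  split_ifs with h
  · subst h; exact pr_same _ hx
  · rfl

lemma ι_smul_single (HM : HatMod HA M) {i j : ℤ} {a : A.carrier} (ha : a ∈ A.grading i)
    {x : M.carrier} (hx : x ∈ M.grading j) :
    HA.ι a • single HM j x = single HM (i + j) (a • x) := by
  refine cd_ext HM fun n => ?_
  rw [cd_ι_smul HM ha, cd_single_of_mem HM hx, cd_single_of_mem HM (M.smul_mem ha hx)]
  by_cases h : n = i + j
  · rw [if_pos h, if_pos (by omega)]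
  · rw [if_neg h, if_neg (by omega), smul_zero]

/-- An element of the completion is the sum of its coordinates in degrees `< m` and of a
remainder in filtration degree `m`. -/
lemma exists_trunc (HM : HatMod HA M) (v : HM.Vh) (m : ℤ) : ∃ r, InFil HM m r ∧
    v = ∑ i ∈ Finset.Ico HM.bound m, single HM i (cd HM v i) + r := by
  refine ⟨v - ∑ i ∈ Finset.Ico HM.bound m, single HM i (cd HM v i), fun n hn => ?_, by abel⟩
  rw [cd_sub, cd_sum]
  simp only [cd_single_of_mem HM (cd_mem HM v _)]
  rw [Finset.sum_ite_eq]
  split_ifs with h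
  · exact sub_self _
  · rw [Finset.mem_Ico, not_and_or] at h
    rw [cd_lt HM v (by omega), sub_zero]

/-- The completion of a homogeneous homomorphism of arbitrary degree. -/
def hatMap (HM : HatMod HA M) (HN : HatMod HA N) {d : ℤ}
    (f : M.carrier →ₗ[A.carrier] N.carrier) (hf : f ∈ ghomSet M N d) :
    HM.Vh →ₗ[HA.Hh] HN.Vh where
  toFun v := mk HN (fun n => f (cd HM v (n - d))) (fun n => by
    simpa using hf _ _ (cd_mem HM v (n - d)))
  map_add' v w := cd_ext HN fun n => by simp
  map_smul' x v := cd_ext HN fun n => by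
    have h : ∀ i ∉ Finset.Icc HA.bound (n - d - HM.bound),
        ca HA x i = 0 ∨ cd HM v (n - d - i) = 0 := by
      intro i hi
      rw [Finset.mem_Icc, not_and_or, not_le, not_le] at hi
      rcases hi with hi | hi
      · exact Or.inl (ca_lt x hi)
      · exact Or.inr (cd_lt HM v (by omega))
    have e : ∀ i, n - i - d = n - d - i := fun i => by omega
    rw [RingHom.id_apply, cd_mk,
      cd_smul HM x v (n - d) (Finset.Icc HA.bound (n - d - HM.bound)),
      cd_smul HN x _ n (Finset.Icc HA.bound (n - d - HM.bound)), map_sum]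
    · exact Finset.sum_congr rfl fun i _ => by rw [cd_mk, map_smul, e]
    · intro i hi
      rcases h i hi with h | h
      · rw [h, zero_smul]
      · rw [cd_mk, e, h, map_zero, smul_zero]
    · intro i hi
      rcases h i hi with h | h
      · rw [h, zero_smul]
      · rw [h, smul_zero]

lemma cd_hatMap (HM : HatMod HA M) (HN : HatMod HA N) {d : ℤ}
    (f : M.carrier →ₗ[A.carrier] N.carrier) (hf : f ∈ ghomSet M N d) (v : HM.Vh) (n : ℤ) :
    cd HN (hatMap HM HN f hf v) n = f (cd HM v (n - d)) := cd_mk _ _ _ _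

lemma map_smul_field (HM : HatMod HA M) (HN : HatMod HA N) (f : HM.Vh →ₗ[HA.Hh] HN.Vh)
    (c : k) (v : HM.Vh) : f (c • v) = c • f v := by
  rw [← one_smul HA.Hh v, ← smul_assoc, map_smul, smul_assoc, ← map_smul, one_smul]

/-- The homogeneous component of degree `d` of a homomorphism between completions, as a
linear map between the uncompleted modules. -/
noncomputable def hcompK (HM : HatMod HA M) (HN : HatMod HA N) (f : HM.Vh →ₗ[HA.Hh] HN.Vh)
    (d : ℤ) : M.carrier →ₗ[k] N.carrier :=
  DirectSum.toModule k ℤ N.carrier (fun i =>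
    ({ toFun := fun x => cd HN (f (single HM i x)) (i + d)
       map_add' := fun x y => by simp
       map_smul' := fun c x => by
         rw [map_smul, map_smul_field, cd_smul_k, RingHom.id_apply] } :
      M.carrier →ₗ[k] N.carrier) ∘ₗ (M.grading i).subtype) ∘ₗ (dec M.internal).toLinearMap

lemma hcompK_of_mem (HM : HatMod HA M) (HN : HatMod HA N) (f : HM.Vh →ₗ[HA.Hh] HN.Vh)
    (d : ℤ) {i : ℤ} {x : M.carrier} (hx : x ∈ M.grading i) :
    hcompK HM HN f d x = cd HN (f (single HM i x)) (i + d) := by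
  simp only [hcompK, LinearMap.comp_apply, LinearEquiv.coe_coe]
  rw [dec_of_mem _ hx, DirectSum.toModule_lof]
  rfl

/-- The homogeneous component of degree `d` of a homomorphism between completions, as a
homomorphism of modules over the uncompleted algebra. -/
noncomputable def hcomp (HM : HatMod HA M) (HN : HatMod HA N) (f : HM.Vh →ₗ[HA.Hh] HN.Vh)
    (d : ℤ) : M.carrier →ₗ[A.carrier] N.carrier where
  toFun := hcompK HM HN f d
  map_add' := map_add _
  map_smul' a x := by
    rw [RingHom.id_apply]
    refine hom_induction A.internal a (by simp) (fun a b ha hb => ?_) (fun i a ha => ?_)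
    · rw [add_smul, map_add, ha, hb, add_smul]
    refine hom_induction M.internal x (by simp) (fun x y hx hy => ?_) (fun j x hx => ?_)
    · rw [smul_add, map_add, hx, hy, map_add, smul_add]
    rw [hcompK_of_mem HM HN f d hx, hcompK_of_mem HM HN f d (M.smul_mem ha hx),
      ← ι_smul_single HM ha hx, map_smul, cd_ι_smul HN ha]
    congr 2
    omega

lemma hcomp_of_mem (HM : HatMod HA M) (HN : HatMod HA N) (f : HM.Vh →ₗ[HA.Hh] HN.Vh)
    (d : ℤ) {i : ℤ} {x : M.carrier} (hx : x ∈ M.grading i) :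
    hcomp HM HN f d x = cd HN (f (single HM i x)) (i + d) := hcompK_of_mem HM HN f d hx

lemma hcomp_mem (HM : HatMod HA M) (HN : HatMod HA N) (f : HM.Vh →ₗ[HA.Hh] HN.Vh)
    (d : ℤ) : hcomp HM HN f d ∈ ghomSet M N d := by
  intro i x hx
  rw [hcomp_of_mem HM HN f d hx]
  exact cd_mem _ _ _

end Coordinates

/-! ### Elements of high degree annihilate simple modules -/

section Simple

variable {HA : HatAlg A} {M N : GMod A}

lemma inFil_pow {y : HA.Hh} (hy : InFil (hatReg HA) 1 y) (m : ℕ) (hm : 0 < m) :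
    InFil (hatReg HA) m (y ^ m) := by
  induction m with
  | zero => omega
  | succ m ih =>
    rcases Nat.eq_zero_or_pos m with rfl | h
    · simpa using hy
    · have := (ih h).smul hy
      rw [pow_succ]
      simpa using this

/-- The geometric series: `1 - y` is left invertible for `y` of positive degree. -/
lemma exists_left_inv {y : HA.Hh} (hy : InFil (hatReg HA) 1 y) :
    ∃ u : HA.Hh, u * (1 - y) = 1 := by
  -- the degree `n` coordinate of the series is that of any sufficiently long partial sum
  let S : ℕ → HA.Hh := fun m => ∑ j ∈ Finset.range m, y ^ j
  have hS : ∀ m m' : ℕ, 0 < m → m ≤ m' → InFil (hatReg HA) m (S m' - S m) := by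
    intro m m' hm hmm n hn
    simp only [S]
    rw [← Finset.sum_Ico_eq_sub _ hmm, cd_sum]
    refine Finset.sum_eq_zero fun j hj => ?_
    rw [Finset.mem_Ico] at hj
    exact inFil_pow hy j (by omega) n (by omega)
  let u : HA.Hh := mk (hatReg HA) (fun n => cd (hatReg HA) (S (n.toNat + 1)) n)
    (fun n => cd_mem _ _ _)
  have hu : ∀ m : ℕ, 0 < m → InFil (hatReg HA) m (u - S m) := by
    intro m hm n hn
    rw [cd_sub, cd_mk, ← cd_sub, ← neg_sub, ← zero_sub, cd_sub, cd_zero, zero_sub,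
      hS (n.toNat + 1) m (by omega) (by omega) n (by omega), neg_zero]
  refine ⟨u, cd_ext (hatReg HA) fun n => ?_⟩
  obtain ⟨m, hm, hm1, hm2⟩ : ∃ m : ℕ, 0 < m ∧ n < m ∧ n < m + HA.bound :=
    ⟨n.toNat + 1 + (n - HA.bound).toNat, by omega, by omega, by omega⟩
  have e : u * (1 - y) = 1 - y ^ m + (u - S m) * (1 - y) := by
    have := geom_sum_mul y m
    have h2 : S m * (1 - y) = 1 - y ^ m := by
      rw [← neg_sub y 1, mul_neg, this, neg_sub]
    rw [← h2]; noncomm_ring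
  have h3 : cd (hatReg HA) ((u - S m) * (1 - y)) n = 0 :=
    (hu m hm).smul (inFil_bound (hatReg HA) (1 - y)) n hm2
  rw [e, cd_add, cd_sub, h3, inFil_pow hy m hm n hm1, sub_zero, add_zero]

/-- Elements of sufficiently high degree lie in the Jacobson radical of the completion, hence
annihilate all its simple modules. -/
lemma smul_eq_zero_of_simple {S : Type} [AddCommGroup S] [Module HA.Hh S]
    (hS : IsSimpleModule HA.Hh S) {x : HA.Hh} (hx : InFil (hatReg HA) (1 - HA.bound) x)
    (s : S) : x • s = 0 := by
  by_contra h
  obtain ⟨y, hy⟩ := IsSimpleModule.toSpanSingleton_surjective HA.Hh h s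
  rw [LinearMap.toSpanSingleton_apply, ← mul_smul] at hy
  have h1 : InFil (hatReg HA) 1 (y * x) := by
    have := (inFil_bound (hatReg HA) y).smul hx
    simpa using this
  obtain ⟨u, hu⟩ := exists_left_inv h1
  have h2 : (1 - y * x) • s = 0 := by rw [sub_smul, hy, one_smul, sub_self]
  have h3 : s = 0 := by rw [← one_smul HA.Hh s, ← hu, mul_smul, h2, smul_zero]
  exact h (by rw [h3, smul_zero])

/-! ### Completions of graded simple modules -/

/-- A graded simple module lives in finitely many degrees: it is generated by any nonzero
homogeneous vector, so its support is bounded above because that of the algebra is bounded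
below. -/
lemma exists_upper (HA : HatAlg A) (hM : IsGSimple M) :
    ∃ U : ℤ, ∀ n ≥ U, ∀ x ∈ M.grading n, x = 0 := by
  obtain ⟨hnt, hs⟩ := hM
  obtain ⟨y, hy⟩ := exists_ne (0 : M.carrier)
  obtain ⟨m, hm⟩ : ∃ m, pr M.internal m y ≠ 0 := by
    by_contra! h
    exact hy (pr_ext M.internal fun i => by rw [h i, map_zero])
  refine ⟨m - HA.bound + 1, fun n hn x hx => ?_⟩
  by_contra hx0
  rcases hs _ (span_singleton_isGSub M hx) with h | h
  · exact hx0 (Submodule.span_singleton_eq_bot.1 h)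
  · have hy' : y ∈ Submodule.span A.carrier {x} := by rw [h]; trivial
    obtain ⟨a, rfl⟩ := Submodule.mem_span_singleton.1 hy'
    apply hm
    rw [pr_smul_right M hx, ← ca_ι (HA := HA), ca_lt _ (by omega), zero_smul]

/-- The completion of a graded simple module is simple. For a nonzero submodule `V`, the
lowest-degree coordinates of its elements form a nonzero graded submodule, which is therefore
everything; descending induction on degree then shows that `V` is everything. -/
lemma simple_hat (HM : HatMod HA M) (hM : IsGSimple M) : IsSimpleModule HA.Hh HM.Vh := by
  have hM' := hM
  obtain ⟨U, hU⟩ := exists_upper HA hM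
  obtain ⟨hnt, hs⟩ := hM
  have hnt' : Nontrivial HM.Vh := by
    obtain ⟨y, hy⟩ := exists_ne (0 : M.carrier)
    obtain ⟨m, hm⟩ : ∃ m, pr M.internal m y ≠ 0 := by
      by_contra! h
      exact hy (pr_ext M.internal fun i => by rw [h i, map_zero])
    refine ⟨single HM m y, 0, fun h => hm ?_⟩
    have := congrArg (fun v => cd HM v m) h
    simpa [cd_single] using this
  have key : ∀ V : Submodule HA.Hh HM.Vh, V ≠ ⊥ → V = ⊤ := by
    intro V hV
    let C : ℤ → AddSubgroup M.carrier := fun n =>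
      { carrier := {x | ∃ v ∈ V, InFil HM n v ∧ cd HM v n = x}
        add_mem' := by
          rintro _ _ ⟨v, hv, hv', rfl⟩ ⟨w, hw, hw', rfl⟩
          exact ⟨v + w, V.add_mem hv hw,
            fun i hi => by rw [cd_add, hv' i hi, hw' i hi, add_zero], cd_add _ _ _ _⟩
        zero_mem' := ⟨0, V.zero_mem, fun i _ => cd_zero _ _, cd_zero _ _⟩
        neg_mem' := by
          rintro _ ⟨v, hv, hv', rfl⟩
          refine ⟨0 - v, V.sub_mem V.zero_mem hv,
            fun i hi => by rw [cd_sub, hv' i hi, cd_zero, sub_zero], by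
              rw [cd_sub, cd_zero, zero_sub]⟩ }
    have hC : ∀ i j, ∀ a ∈ A.grading i, ∀ x ∈ M.grading j, x ∈ C j → a • x ∈ C (i + j) := by
      rintro i j a ha x - ⟨v, hv, hv', rfl⟩
      refine ⟨HA.ι a • v, V.smul_mem _ hv, fun n hn => ?_, ?_⟩
      · rw [cd_ι_smul HM ha, hv' _ (by omega), smul_zero]
      · rw [cd_ι_smul HM ha]
        congr 2; omega
    have hW : gsub M C hC = ⊤ := by
      refine (hs _ gsub_isGSub).resolve_left fun h0 => hV ?_
      rw [eq_bot_iff]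
      intro v hv
      -- every coordinate vanishes, by ascending induction starting at the lower bound
      have hz : ∀ m : ℕ, InFil HM (HM.bound + m) v := by
        intro m
        induction m with
        | zero => simpa using inFil_bound HM v
        | succ m ih =>
          intro n hn
          rcases lt_or_ge n (HM.bound + m) with h | h
          · exact ih n h
          · obtain rfl : n = HM.bound + m := by push_cast at hn; omega
            have h1 : cd HM v (HM.bound + m) ∈ gsub M C hC :=
              (mem_gsub_of_mem (cd_mem _ _ _)).2 ⟨v, hv, ih, rfl⟩
            rw [h0] at h1
            exact h1
      rw [Submodule.mem_bot]
      refine cd_ext HM fun n => ?_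
      rw [cd_zero]
      exact hz (n - HM.bound).toNat.succ n (by push_cast; omega)
    have hdown : ∀ m : ℕ, ∀ v, InFil HM (U - m) v → v ∈ V := by
      intro m
      induction m with
      | zero =>
        intro v hv
        have : v = 0 := cd_ext HM fun n => by
          rw [cd_zero]
          rcases lt_or_ge n U with h | h
          · exact hv n (by simpa using h)
          · exact hU n h _ (cd_mem _ _ _)
        rw [this]; exact V.zero_mem
      | succ m ih =>
        intro v hv
        have h1 : cd HM v (U - (m + 1 : ℕ)) ∈ gsub M C hC := by rw [hW]; trivial
        obtain ⟨w, hw, hw', hwv⟩ := (mem_gsub_of_mem (cd_mem _ _ _)).1 h1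
        have h2 : v - w ∈ V := ih _ fun n hn => by
          rw [cd_sub]
          rcases lt_or_ge n (U - (m + 1 : ℕ)) with h | h
          · rw [hv n h, hw' n h, sub_zero]
          · obtain rfl : n = U - (m + 1 : ℕ) := by push_cast at h ⊢; omega
            rw [hwv, sub_self]
        simpa using V.add_mem h2 hw
    rw [eq_top_iff]
    intro v _
    exact hdown (U - HM.bound).toNat v ((inFil_bound HM v).mono (by omega))
  rw [isSimpleModule_iff]
  exact { toNontrivial := by
            rwa [Submodule.nontrivial_iff]
          eq_bot_or_eq_top := fun V => or_iff_not_imp_left.2 (key V) }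

/-- A homomorphism that kills all elements of high degree, and whose homogeneous components all
vanish on the coordinates of `v`, kills `v`. -/
lemma map_eq_zero (HM : HatMod HA M) (HN : HatMod HA N) (f : HM.Vh →ₗ[HA.Hh] HN.Vh)
    {m : ℤ} (hm : ∀ v, InFil HM m v → f v = 0) {v : HM.Vh}
    (hv : ∀ d i, hcomp HM HN f d (cd HM v i) = 0) : f v = 0 := by
  obtain ⟨r, hr, h⟩ := exists_trunc HM v m
  rw [h, map_add, hm r hr, map_sum, add_zero]
  refine Finset.sum_eq_zero fun i _ => cd_ext HN fun n => ?_
  have := hv (n - i) i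
  rw [hcomp_of_mem HM HN f _ (cd_mem HM v i)] at this
  simpa using this

/-- A nonzero homogeneous homomorphism between graded simple modules is an isomorphism up to
a grading shift. -/
lemma giso_of_ne (hM : IsGSimple M) (hN : IsGSimple N) {d : ℤ}
    {f : M.carrier →ₗ[A.carrier] N.carrier} (hf : f ∈ ghomSet M N d) (h0 : f ≠ 0) :
    Nonempty (GIso M (GMod.shift (-d) N)) := by
  have hk : LinearMap.ker f = ⊥ := by
    refine (hM.2 _ (ker_isGSub hf)).resolve_right fun h => h0 (LinearMap.ker_eq_top.1 h)
  have hr : LinearMap.range f = ⊤ := by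
    rw [LinearMap.range_eq_map]
    refine (hN.2 _ (map_isGSub hf (top_isGSub M))).resolve_left fun h => h0 ?_
    rw [← LinearMap.range_eq_map] at h
    exact LinearMap.range_eq_bot.1 h
  let e : M.carrier ≃ₗ[A.carrier] N.carrier :=
    LinearEquiv.ofBijective f ⟨LinearMap.ker_eq_bot.1 hk, LinearMap.range_eq_top.1 hr⟩
  refine ⟨⟨e, fun i x hx => ?_, fun i y hy => ?_⟩⟩
  · change f x ∈ N.grading (i - -d)
    rw [sub_neg_eq_add]
    exact hf i x hx
  · change y ∈ N.grading (i - -d) at hy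
    rw [sub_neg_eq_add] at hy
    obtain ⟨x, rfl⟩ := LinearMap.range_eq_top.1 hr y
    have h1 : pr N.internal (i + d) (f x) = f (pr M.internal i x) := pr_map hf x i
    have h3 : pr N.internal (i + d) (f x) = f x := pr_same _ hy
    rw [h3] at h1
    have h2 : e.symm (f x) = x := e.symm_apply_apply x
    change e.symm (f x) ∈ _
    rw [h2, LinearMap.ker_eq_bot.1 hk h1]
    exact pr_mem _ _ _

/-- Graded simple modules with isomorphic completions agree up to a grading shift. -/
lemma giso_of_hat_equiv (HM : HatMod HA M) (HN : HatMod HA N) (hM : IsGSimple M)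
    (hN : IsGSimple N) (e : HM.Vh ≃ₗ[HA.Hh] HN.Vh) :
    ∃ d : ℤ, Nonempty (GIso M (GMod.shift d N)) := by
  by_contra! hcon
  have h0 : ∀ d, hcomp HM HN (e : HM.Vh →ₗ[HA.Hh] HN.Vh) d = 0 := by
    intro d
    by_contra h
    exact (hcon (-d)).false (giso_of_ne hM hN (hcomp_mem _ _ _ _) h).some
  obtain ⟨U, hU⟩ := exists_upper HA hM
  have hs := simple_hat HM hM
  have := IsSimpleModule.nontrivial HA.Hh HM.Vh
  obtain ⟨v, hv⟩ := exists_ne (0 : HM.Vh)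
  refine hv (e.injective ?_)
  rw [map_zero]
  refine map_eq_zero HM HN (e : HM.Vh →ₗ[HA.Hh] HN.Vh) (m := U) (fun w hw => ?_)
    fun d i => by rw [h0]; rfl
  have : w = 0 := cd_ext HM fun n => by
    rw [cd_zero]
    rcases lt_or_ge n U with h | h
    · exact hw n h
    · exact hU n h _ (cd_mem _ _ _)
  rw [this, map_zero]

end Simple

/-! ### Completions of graded projective modules -/

section Projective

variable {HA : HatAlg A} {M N : GMod A}

/-- A finite free graded module, on generators of the prescribed degrees. -/
noncomputable def gfree (A : GAlg k) (ι : Type) [Fintype ι] (d : ι → ℤ) : GMod A where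
  carrier := ι → A.carrier
  grading := fun i => Submodule.pi Set.univ fun j => A.grading (i - d j)
  internal := by
    classical
    refine isInternal_of_proj
      (fun i => LinearMap.pi fun j => pr A.internal (i - d j) ∘ₗ LinearMap.proj j) ?_ ?_ ?_
    · intro i x hx
      funext j
      exact pr_same _ (hx j trivial)
    · intro i i' hi x hx
      funext j
      exact pr_ne _ (hx j trivial) (by omega)
    · intro x
      choose T hT hT' using fun j => exists_sum A.internal (x j)
      refine ⟨Finset.univ.biUnion fun j => (T j).image (fun i => i + d j),
        fun i j => pr A.internal (i - d j) (x j), fun i j _ => pr_mem _ _ _, ?_⟩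
      funext j
      rw [Finset.sum_apply]
      conv_lhs => rw [hT' j]
      have h1 : ∑ i ∈ T j, pr A.internal i (x j) =
          ∑ i ∈ (T j).image (fun i => i + d j), pr A.internal (i - d j) (x j) := by
        rw [Finset.sum_image (fun a _ b _ h => by simpa using h)]
        exact Finset.sum_congr rfl fun i _ => by rw [add_sub_cancel_right]
      rw [h1]
      refine Finset.sum_subset (Finset.subset_biUnion_of_mem
        (fun j => (T j).image (fun i => i + d j)) (Finset.mem_univ j)) fun i _ hi => ?_
      refine hT j _ fun h => hi ?_
      exact Finset.mem_image.2 ⟨_, h, by omega⟩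
  smul_mem := by
    intro i i' a x ha hx j hj
    have := A.mul_mem ha (hx j hj)
    rw [← add_sub_assoc] at this
    exact this
  fg := inferInstance

lemma exists_hom_gens (M : GMod A) : ∃ (ι : Type) (_ : Fintype ι) (d : ι → ℤ)
    (p : ι → M.carrier), (∀ j, p j ∈ M.grading (d j)) ∧
      Submodule.span A.carrier (Set.range p) = ⊤ := by
  classical
  obtain ⟨s, hs⟩ := M.fg
  choose T hT hT' using exists_sum M.internal
  let I : Finset (ℤ × M.carrier) := s.biUnion fun x => (T x).image fun i => (i, x)
  refine ⟨I, inferInstance, fun j => j.1.1, fun j => pr M.internal j.1.1 j.1.2,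
    fun j => pr_mem _ _ _, ?_⟩
  rw [eq_top_iff, ← hs, Submodule.span_le]
  intro x hx
  rw [SetLike.mem_coe, hT' x]
  refine Submodule.sum_mem _ fun i hi => Submodule.subset_span ?_
  exact ⟨⟨(i, x), Finset.mem_biUnion.2 ⟨x, hx, Finset.mem_image.2 ⟨i, hi, rfl⟩⟩⟩, rfl⟩

/-- A homogeneous dual basis of a graded projective module, obtained by splitting a surjection
from a finite free graded module. -/
lemma exists_dual_basis (hM : GProjective M) : ∃ (ι : Type) (_ : Fintype ι) (d : ι → ℤ)
    (p : ι → M.carrier) (l : ι → M.carrier →ₗ[A.carrier] (reg A).carrier),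
      (∀ j, p j ∈ M.grading (d j)) ∧ (∀ j, l j ∈ ghomSet M (reg A) (-d j)) ∧
      ∀ x, x = ∑ j, (l j x : A.carrier) • p j := by
  obtain ⟨ι, _, d, p, hp, hspan⟩ := exists_hom_gens M
  let g : (ι → A.carrier) →ₗ[A.carrier] M.carrier := Fintype.linearCombination A.carrier p
  have hg : ∀ x, g x = ∑ j, x j • p j := fun x => Fintype.linearCombination_apply A.carrier p x
  let g' : gfree A ι d ⟶ M := ⟨g, fun i x hx => by
    have hgx : g x = ∑ j, (x : ι → A.carrier) j • p j := hg x
    change g x ∈ _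
    refine hgx ▸ Submodule.sum_mem _ fun j _ => ?_
    have := M.smul_mem (hx j trivial) (hp j)
    rwa [sub_add_cancel] at this⟩
  have hsurj : Function.Surjective g'.1 := by
    change Function.Surjective g
    rw [← LinearMap.range_eq_top, ← hspan]
    exact Fintype.range_linearCombination A.carrier p
  obtain ⟨l, hl⟩ := hM _ _ g' (𝟙 M) hsurj
  refine ⟨ι, inferInstance, d, p, fun j => (LinearMap.proj j : (ι → A.carrier) →ₗ[A.carrier]
    A.carrier) ∘ₗ l.1, hp, fun j i x hx => ?_, fun x => ?_⟩
  · exact l.2 i x hx j trivial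
  · have h1 : g (l.1 x) = x := congrArg (fun f : M ⟶ M => f.1 x) hl
    exact h1.symm.trans (hg (l.1 x))

/-- The completion of a homogeneous dual basis. -/
lemma exists_hat_dual_basis (HM : HatMod HA M) (hM : GProjective M) :
    ∃ (ι : Type) (_ : Fintype ι) (d : ι → ℤ) (p : ι → HM.Vh)
      (l : ι → HM.Vh →ₗ[HA.Hh] HA.Hh),
      (∀ j m v, InFil HM m v → InFil (hatReg HA) (m - d j) (l j v)) ∧
      ∀ v, v = ∑ j, l j v • p j := by
  obtain ⟨ι, _, d, p, l, hp, hl, hpl⟩ := exists_dual_basis hM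
  refine ⟨ι, inferInstance, d, fun j => single HM (d j) (p j),
    fun j => hatMap HM (hatReg HA) (l j) (hl j), fun j m v hv n hn => ?_, fun v => ?_⟩
  · rw [cd_hatMap, hv _ (by omega), map_zero]
  · refine cd_ext HM fun n => ?_
    rw [cd_sum, hpl (cd HM v n)]
    refine Finset.sum_congr rfl fun j _ => ?_
    have hc : ∀ i, ca HA (hatMap HM (hatReg HA) (l j) (hl j) v) i =
        l j (cd HM v (i - -d j)) := fun i => cd_hatMap HM (hatReg HA) (l j) (hl j) v i
    rw [cd_smul HM _ _ n {n - d j}, Finset.sum_singleton, hc, cd_single_of_mem HM (hp j)]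
    · rw [if_pos (by omega)]
      congr 3; omega
    · intro i hi
      rw [Finset.mem_singleton] at hi
      rw [cd_single_of_mem HM (hp j), if_neg (by omega), smul_zero]

lemma hat_projective (HM : HatMod HA M) (hM : GProjective M) :
    Module.Projective HA.Hh HM.Vh := by
  obtain ⟨ι, _, d, p, l, -, hpl⟩ := exists_hat_dual_basis HM hM
  refine Module.Projective.of_split (M := ι → HA.Hh) (LinearMap.pi l)
    (Fintype.linearCombination HA.Hh p) (LinearMap.ext fun v => ?_)
  rw [LinearMap.comp_apply, Fintype.linearCombination_apply, LinearMap.id_apply]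
  exact (hpl v).symm

lemma hat_finite (HM : HatMod HA M) (hM : GProjective M) : Module.Finite HA.Hh HM.Vh := by
  obtain ⟨ι, _, d, p, l, -, hpl⟩ := exists_hat_dual_basis HM hM
  refine Module.Finite.of_surjective (Fintype.linearCombination HA.Hh p) fun v =>
    ⟨fun j => l j v, ?_⟩
  rw [Fintype.linearCombination_apply]
  exact (hpl v).symm

/-- Homomorphisms from the completion of a graded projective module to a simple module are
continuous: they kill all elements of sufficiently high degree. -/
lemma exists_map_eq_zero (HM : HatMod HA M) (hM : GProjective M) {S : Type} [AddCommGroup S]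
    [Module HA.Hh S] (hS : IsSimpleModule HA.Hh S) (f : HM.Vh →ₗ[HA.Hh] S) :
    ∃ m : ℤ, ∀ v, InFil HM m v → f v = 0 := by
  obtain ⟨ι, _, d, p, l, hd, hpl⟩ := exists_hat_dual_basis HM hM
  obtain ⟨D, hD⟩ : ∃ D : ℤ, ∀ j, d j ≤ D := by
    obtain ⟨D, hD⟩ := (Set.finite_range d).bddAbove
    exact ⟨D, fun j => hD ⟨j, rfl⟩⟩
  refine ⟨1 - HA.bound + D, fun v hv => ?_⟩
  rw [hpl v, map_sum]
  refine Finset.sum_eq_zero fun j _ => ?_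
  rw [map_smul]
  exact smul_eq_zero_of_simple hS ((hd j _ v hv).mono (by have := hD j; omega)) _

/-- The completion of a projective cover is an essential epimorphism. A proper submodule
supplementing the kernel lies in a maximal one, which is the kernel of a homomorphism `f` onto
the completion of a graded simple module `N`; each homogeneous component of `f` is either zero
or onto, so it vanishes on the superfluous submodule `ker p`, and `f` vanishes on the completed
kernel. -/
lemma hat_essential {L : GMod A} (HM : HatMod HA M) (HL : HatMod HA L) (hM : GProjective M)
    (p : M ⟶ L)
    (hp : ∀ W : Submodule A.carrier M.carrier, M.IsGSub W → W ⊔ LinearMap.ker p.1 = ⊤ → W = ⊤)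
    (hp0 : p.1 ∈ ghomSet M L 0)
    (hall : ∀ (S : Type) [AddCommGroup S] [Module HA.Hh S], IsSimpleModule HA.Hh S →
      ∃ (N : GMod A) (HN : HatMod HA N), IsGSimple N ∧ Nonempty (S ≃ₗ[HA.Hh] HN.Vh))
    (V : Submodule HA.Hh HM.Vh)
    (hV : V ⊔ LinearMap.ker (hatMap HM HL p.1 hp0) = ⊤) : V = ⊤ := by
  have := hat_finite HM hM
  by_contra hne
  obtain ⟨V', hV', hle⟩ := (eq_top_or_exists_le_coatom V).resolve_left hne
  have hS : IsSimpleModule HA.Hh (HM.Vh ⧸ V') := isSimpleModule_iff_isCoatom.2 hV'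
  obtain ⟨N, HN, hN, ⟨e⟩⟩ := hall _ hS
  let f : HM.Vh →ₗ[HA.Hh] HN.Vh := (e : _ →ₗ[HA.Hh] HN.Vh) ∘ₗ V'.mkQ
  obtain ⟨m, hm⟩ := exists_map_eq_zero HM hM (simple_hat HN hN) f
  have hcompz : ∀ d, ∀ y ∈ LinearMap.ker p.1, hcomp HM HN f d y = 0 := by
    intro d y hy
    by_contra hy0
    have hfd := hcomp_mem HM HN f d
    have h1 : (LinearMap.ker p.1).map (hcomp HM HN f d) = ⊤ := by
      refine (hN.2 _ (map_isGSub hfd (ker_isGSub hp0))).resolve_left fun h => hy0 ?_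
      have : hcomp HM HN f d y ∈ (LinearMap.ker p.1).map (hcomp HM HN f d) := ⟨y, hy, rfl⟩
      rwa [h] at this
    have h2 : LinearMap.ker (hcomp HM HN f d) = ⊤ := by
      refine hp _ (ker_isGSub hfd) ?_
      rw [eq_top_iff]
      intro x _
      have hx : hcomp HM HN f d x ∈ (LinearMap.ker p.1).map (hcomp HM HN f d) := by
        rw [h1]; trivial
      obtain ⟨z, hz, hzx⟩ := hx
      have h3 : x - z ∈ LinearMap.ker (hcomp HM HN f d) := by
        rw [LinearMap.mem_ker, map_sub, hzx, sub_self]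
      rw [← sub_add_cancel x z]
      exact Submodule.add_mem_sup h3 hz
    have h4 : y ∈ LinearMap.ker (hcomp HM HN f d) := by rw [h2]; trivial
    exact hy0 h4
  refine hV'.1 (eq_top_iff.2 ?_)
  rw [← hV]
  refine sup_le hle fun v hv => ?_
  have h5 : f v = 0 := by
    refine map_eq_zero HM HN f hm fun d i => hcompz d _ ?_
    have := cd_hatMap HM HL p.1 hp0 v i
    rw [LinearMap.mem_ker.1 hv, cd_zero, sub_zero] at this
    exact this.symm
  have h6 : V'.mkQ v = 0 := e.injective (by rw [map_zero]; exact h5)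
  simpa using h6

lemma hatMap_surjective (HM : HatMod HA M) (HN : HatMod HA N) {f : M.carrier →ₗ[A.carrier]
    N.carrier} (hf : f ∈ ghomSet M N 0) (hs : Function.Surjective f) :
    Function.Surjective (hatMap HM HN f hf) := by
  intro w
  choose x hx using fun n => hs (cd HN w n)
  refine ⟨mk HM (fun n => pr M.internal n (x n)) fun n => pr_mem _ _ _, cd_ext HN fun n => ?_⟩
  rw [cd_hatMap, cd_mk, ← pr_map hf, sub_zero, add_zero, hx, pr_same _ (cd_mem _ _ _)]

end Projective

/-! ### Classification of the simple modules over the completion -/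

section Classification

variable {HA : HatAlg A}

lemma single_hatReg {i : ℤ} {a : A.carrier} (ha : a ∈ A.grading i) :
    single (hatReg HA) i a = HA.ι a := by
  refine cd_ext (hatReg HA) fun n => ?_
  have h1 : cd (hatReg HA) (HA.ι a) n = pr A.internal n a := ca_ι a n
  rw [h1, cd_single_of_mem (hatReg HA) ha]
  split_ifs with h
  · subst h; exact (pr_same _ ha).symm
  · exact (pr_ne _ ha (Ne.symm h)).symm

lemma inFil_ι {i : ℤ} {a : A.carrier} (ha : a ∈ A.grading i) :
    InFil (hatReg HA) i (HA.ι a) := by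
  intro n hn
  rw [← single_hatReg ha, cd_single_of_mem (hatReg HA) ha, if_neg (by omega)]

section Ann

variable {S : Type} [AddCommGroup S] [Module HA.Hh S]

/-- The largest graded left ideal that annihilates the vector `u`. -/
noncomputable def gann (HA : HatAlg A) {S : Type} [AddCommGroup S] [Module HA.Hh S] (u : S) :
    Submodule A.carrier (reg A).carrier :=
  gsub (reg A)
    (fun _ =>
      { carrier := {x | HA.ι x • u = 0}
        add_mem' := fun {x y} hx hy => by
          rw [Set.mem_ofPred_eq] at *
          rw [map_add, add_smul, hx, hy, add_zero]
        zero_mem' := by rw [Set.mem_ofPred_eq, map_zero, zero_smul]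
        neg_mem' := fun {x} hx => by
          rw [Set.mem_ofPred_eq] at *
          rw [map_neg, neg_smul, hx, neg_zero] })
    (fun _ _ a _ x _ hx => by
      change HA.ι (a * x) • u = 0
      have hx : HA.ι x • u = 0 := hx
      rw [map_mul, mul_smul, hx, smul_zero])

lemma mem_gann {u : S} {x : A.carrier} :
    x ∈ gann HA u ↔ ∀ i, HA.ι (pr A.internal i x) • u = 0 := Iff.rfl

lemma mem_gann_of_mem {u : S} {i : ℤ} {x : A.carrier} (hx : x ∈ A.grading i) :
    x ∈ gann HA u ↔ HA.ι x • u = 0 := mem_gsub_of_mem (M := reg A) hx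

/-- The graded annihilator of a vector in a simple module has finite codimension, as it
contains all elements of high degree. -/
lemma finite_quot_gann (hlaur : A.Laurentian) (hS : IsSimpleModule HA.Hh S) (u : S) :
    Module.Finite k ((reg A).carrier ⧸ gann HA u) := by
  classical
  have hfd := hlaur.2
  let T : Finset ℤ := Finset.Ico HA.bound (1 - HA.bound)
  let φ : ((i : T) → A.grading i) →ₗ[k] ((reg A).carrier ⧸ gann HA u) :=
    ((gann HA u).mkQ.restrictScalars k) ∘ₗ
      ∑ i : T, (A.grading i).subtype ∘ₗ LinearMap.proj i
  refine Module.Finite.of_surjective φ fun q => ?_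
  obtain ⟨x, rfl⟩ := (gann HA u).mkQ_surjective q
  refine ⟨fun i => ⟨pr A.internal i x, pr_mem _ _ _⟩, ?_⟩
  have h1 : φ (fun i => ⟨pr A.internal i x, pr_mem _ _ _⟩) =
      (gann HA u).mkQ (∑ i : T, pr A.internal i x) := by
    simp [φ]
  rw [h1, ← sub_eq_zero, ← map_sub, Submodule.mkQ_apply, Submodule.Quotient.mk_eq_zero,
    mem_gann]
  intro i
  rw [Finset.sum_coe_sort T (fun i => pr A.internal i x), map_sub, map_sum]
  have h2 : ∀ j ∈ T, pr A.internal i (pr A.internal j x) =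
      if i = j then pr A.internal i x else 0 := by
    intro j _
    split_ifs with h
    · subst h; exact pr_same _ (pr_mem _ _ _)
    · exact pr_ne _ (pr_mem _ _ _) (Ne.symm h)
  rw [Finset.sum_congr rfl h2, Finset.sum_ite_eq]
  split_ifs with h
  · rw [sub_self, map_zero, zero_smul]
  · rw [zero_sub, map_neg, neg_smul, neg_eq_zero]
    rw [Finset.mem_Ico, not_and_or, not_le, not_lt] at h
    rcases h with h | h
    · rw [← ca_ι (HA := HA), ca_lt _ h, map_zero, zero_smul]
    · exact smul_eq_zero_of_simple hS ((inFil_ι (pr_mem _ _ _)).mono h) u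

/-- Every simple module over the completion contains a nonzero vector whose graded annihilator
is a maximal graded left ideal. It is found as `h • u₀` with `h` homogeneous such that
`h • u₀ ≠ 0` and the image of `H h` in `H / gann u₀` is minimal. -/
lemma exists_simple_gann (hlaur : A.Laurentian) (hS : IsSimpleModule HA.Hh S) :
    ∃ u : S, u ≠ 0 ∧ IsGSimple (gquot (reg A) (gann HA u) gsub_isGSub) := by
  have := IsSimpleModule.nontrivial HA.Hh S
  obtain ⟨u₀, hu₀⟩ := exists_ne (0 : S)
  have := finite_quot_gann hlaur hS u₀
  have hart : IsArtinian k ((reg A).carrier ⧸ gann HA u₀) := inferInstance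
  let W : A.carrier → Submodule k ((reg A).carrier ⧸ gann HA u₀) := fun h =>
    ((Submodule.span A.carrier {h}).map (gann HA u₀).mkQ).restrictScalars k
  obtain ⟨_, ⟨j, h, hj, hu, rfl⟩, hmin⟩ := (wellFounded_lt
    (α := Submodule k ((reg A).carrier ⧸ gann HA u₀))).has_min
    {w | ∃ j, ∃ h ∈ A.grading j, HA.ι h • u₀ ≠ 0 ∧ w = W h}
    ⟨W 1, 0, 1, A.one_mem, by rwa [map_one, one_smul], rfl⟩
  refine ⟨HA.ι h • u₀, hu, ?_, fun V hV => or_iff_not_imp_left.2 fun hV0 => ?_⟩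
  · refine Submodule.Quotient.nontrivial_iff.2 fun htop => hu ?_
    have h1 : (1 : A.carrier) ∈ gann HA (HA.ι h • u₀) := by rw [htop]; trivial
    rw [mem_gann_of_mem A.one_mem, map_one, one_smul] at h1
    exact h1
  · obtain ⟨q, hq, hq0⟩ := (Submodule.ne_bot_iff _).1 hV0
    rw [isGSub_iff] at hV
    obtain ⟨i, hi⟩ : ∃ i, pr (gquot (reg A) (gann HA (HA.ι h • u₀)) gsub_isGSub).internal i q
        ≠ 0 := by
      by_contra! hcon
      exact hq0 (pr_ext _ fun i => by rw [hcon i, map_zero])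
    obtain ⟨g, hg, hgq⟩ := pr_mem
      (gquot (reg A) (gann HA (HA.ι h • u₀)) gsub_isGSub).internal i q
    have hgV : (gann HA (HA.ι h • u₀)).mkQ g ∈ V := by
      have := hV q hq i
      rw [← hgq] at this
      exact this
    have hg0 : HA.ι (g * h) • u₀ ≠ 0 := by
      intro hcon
      rw [map_mul, mul_smul] at hcon
      have h1 : g ∈ gann HA (HA.ι h • u₀) := (mem_gann_of_mem hg).2 hcon
      refine hi (hgq.symm.trans ?_)
      exact (Submodule.Quotient.mk_eq_zero _).2 h1
    have hle : W (g * h) ≤ W h := by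
      refine Submodule.map_mono (f := (gann HA u₀).mkQ) ?_
      rw [Submodule.span_singleton_le_iff_mem]
      exact Submodule.mem_span_singleton.2 ⟨g, rfl⟩
    have heq : W (g * h) = W h := by
      by_contra hne
      exact hmin _ ⟨_, g * h, A.mul_mem hg hj, hg0, rfl⟩ (lt_of_le_of_ne hle hne)
    have hh : (gann HA u₀).mkQ h ∈ W h :=
      ⟨h, Submodule.mem_span_singleton_self h, rfl⟩
    rw [← heq] at hh
    obtain ⟨y, hy, hyh⟩ := hh
    obtain ⟨b, rfl⟩ := Submodule.mem_span_singleton.1 hy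
    have h2 : (1 - b * g) * h ∈ gann HA u₀ := by
      have : (gann HA u₀).mkQ ((1 - b * g) * h) = 0 := by
        have e : (1 - b * g) * h = h - b • (g * h) := by
          rw [sub_mul, one_mul, smul_eq_mul, mul_assoc]
        rw [e, map_sub, hyh, sub_self]
      simpa using this
    have h3 : 1 - b * g ∈ gann HA (HA.ι h • u₀) := by
      rw [mem_gann]
      intro n
      have h4 := mem_gann.1 h2 (n + j)
      have h5 : pr A.internal (n + j) ((1 - b * g) * h) = pr A.internal n (1 - b * g) * h := by
        have := pr_smul_right (reg A) (x := h) hj (1 - b * g) (n + j)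
        rw [add_sub_cancel_right] at this
        exact this
      rwa [h5, map_mul, mul_smul] at h4
    have h6 : (gann HA (HA.ι h • u₀)).mkQ (1 : A.carrier) ∈ V := by
      have e : (gann HA (HA.ι h • u₀)).mkQ (1 : A.carrier) =
          b • (gann HA (HA.ι h • u₀)).mkQ g := by
        rw [← map_smul, ← sub_eq_zero, ← map_sub, smul_eq_mul]
        exact (Submodule.Quotient.mk_eq_zero _).2 h3
      rw [e]
      exact V.smul_mem b hgV
    rw [eq_top_iff]
    intro z _
    obtain ⟨x, rfl⟩ := (gann HA (HA.ι h • u₀)).mkQ_surjective z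
    have e : (gann HA (HA.ι h • u₀)).mkQ x = x • (gann HA (HA.ι h • u₀)).mkQ (1 : A.carrier) := by
      rw [← map_smul, smul_eq_mul, mul_one]
    rw [e]
    exact V.smul_mem x h6

/-- A simple module over the completion is the completion of the graded simple module attached
to any of its vectors with maximal graded annihilator: the annihilator of the generator of the
latter is contained in that of the vector. -/
lemma equiv_of_giso (hS : IsSimpleModule HA.Hh S) {L : GMod A} (HL : HatMod HA L)
    (hL : IsGSimple L) {u : S} (hu : u ≠ 0) {d : ℤ}
    (e : GIso (gquot (reg A) (gann HA u) gsub_isGSub) (GMod.shift d L)) :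
    Nonempty (S ≃ₗ[HA.Hh] HL.Vh) := by
  have hHL := simple_hat HL hL
  let v : L.carrier := e.e ((gann HA u).mkQ (1 : A.carrier))
  have hv : v ∈ L.grading (0 - d) := e.mem 0 _ ⟨1, A.one_mem, rfl⟩
  have hav : ∀ a : A.carrier, a • v = 0 → a ∈ gann HA u := by
    intro a ha
    have h1 : e.e ((gann HA u).mkQ a) = 0 := by
      have h2 : (gann HA u).mkQ a = a • (gann HA u).mkQ (1 : A.carrier) := by
        rw [← map_smul, smul_eq_mul, mul_one]
      rw [h2]
      exact (e.e.map_smul a _).trans ha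
    exact (Submodule.Quotient.mk_eq_zero _).1 (e.e.injective (h1.trans e.e.map_zero.symm))
  have hu1 : HA.ι 1 • u ≠ 0 := by rwa [map_one, one_smul]
  have hv0 : single HL (0 - d) v ≠ 0 := by
    intro h
    have h1 := congrArg (fun w => cd HL w (0 - d)) h
    simp only [cd_single_of_mem HL hv, cd_zero, if_true] at h1
    refine hu1 ((mem_gann_of_mem A.one_mem).1 (hav 1 ?_))
    rw [h1, smul_zero]
  let f := LinearMap.toSpanSingleton HA.Hh HL.Vh (single HL (0 - d) v)
  have hf : Function.Surjective f := IsSimpleModule.toSpanSingleton_surjective HA.Hh hv0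
  have hle : LinearMap.ker f ≤ LinearMap.ker (LinearMap.toSpanSingleton HA.Hh S u) := by
    intro x hx
    have hx' : x • single HL (0 - d) v = 0 := hx
    have hi : ∀ i, HA.ι (ca HA x i) • u = 0 := by
      intro i
      refine (mem_gann_of_mem (ca_mem x i)).1 (hav _ ?_)
      have h1 := congrArg (fun w => cd HL w (i - d)) hx'
      simp only [cd_zero] at h1
      rw [cd_smul HL _ _ _ {i}, Finset.sum_singleton, cd_single_of_mem HL hv,
        if_pos (by omega)] at h1
      · exact h1
      · intro n hn
        rw [Finset.mem_singleton] at hn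
        rw [cd_single_of_mem HL hv, if_neg (by omega), smul_zero]
    obtain ⟨r, hr, h⟩ := exists_trunc (hatReg HA) x (1 - HA.bound)
    rw [LinearMap.mem_ker, LinearMap.toSpanSingleton_apply, h, add_smul,
      smul_eq_zero_of_simple hS hr, add_zero, Finset.sum_smul]
    refine Finset.sum_eq_zero fun i _ => ?_
    rw [single_hatReg (cd_mem (hatReg HA) x i)]
    exact hi i
  let φ : HL.Vh →ₗ[HA.Hh] S :=
    (LinearMap.ker f).liftQ _ hle ∘ₗ (f.quotKerEquivOfSurjective hf).symm.toLinearMap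
  have hφ : φ ≠ 0 := by
    intro h0
    have h1 : (LinearMap.ker f).liftQ _ hle (Submodule.Quotient.mk 1) = 0 := by
      have := congrArg (fun ψ => ψ (f.quotKerEquivOfSurjective hf (Submodule.Quotient.mk 1))) h0
      simpa [φ] using this
    rw [Submodule.liftQ_apply, LinearMap.toSpanSingleton_apply, one_smul] at h1
    exact hu h1
  exact ⟨(LinearEquiv.ofBijective φ (LinearMap.bijective_of_ne_zero hφ)).symm⟩

end Ann

end Classification

end GCompl

/-- For a left Noetherian Laurentian graded algebra with
property `(♠)` and a complete irredundant family `{L(π)}` of graded simple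
modules with projective covers `P(π)`:  (1) the completions `L(π)^∧` form a
complete irredundant set of simple `Ĥ`-modules; (2) each `P(π)^∧` is a
projective cover of `L(π)^∧` in `Ĥ`-mof. -/
theorem completion_simples_and_projective_covers
    {k : Type} [Field k] (A : GAlg k)
    (hlaur : A.Laurentian) (hnoeth : IsNoetherianRing A.carrier)
    (hspade : A.Spade) (HA : HatAlg A)
    (Idx : Type) [Fintype Idx]
    (L P : Idx → GMod A)
    (hsimple : ∀ π, IsGSimple (L π))
    (hcomplete : ∀ N : GMod A, IsGSimple N →
      ∃ (π : Idx) (d : ℤ), Nonempty (GIso N (GMod.shift d (L π))))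
    (hirred : ∀ (π σ : Idx) (d : ℤ),
      Nonempty (GIso (L π) (GMod.shift d (L σ))) → π = σ)
    (hproj : ∀ π, GProjective (P π))
    (hcover : ∀ π, ∃ p : P π ⟶ L π, Function.Surjective p.1 ∧
      ∀ W : Submodule A.carrier (P π).carrier, (P π).IsGSub W →
        W ⊔ LinearMap.ker p.1 = ⊤ → W = ⊤)
    (HL : ∀ π, HatMod HA (L π)) (HP : ∀ π, HatMod HA (P π)) :
    -- (1)
    (∀ π, IsSimpleModule HA.Hh (HL π).Vh) ∧
    (∀ (N : Type) [AddCommGroup N] [Module HA.Hh N], IsSimpleModule HA.Hh N →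
      ∃ π, Nonempty (N ≃ₗ[HA.Hh] (HL π).Vh)) ∧
    (∀ π σ, Nonempty ((HL π).Vh ≃ₗ[HA.Hh] (HL σ).Vh) → π = σ) ∧
    -- (2)
    (∀ π, Module.Projective HA.Hh (HP π).Vh ∧
      ∃ p : (HP π).Vh →ₗ[HA.Hh] (HL π).Vh, Function.Surjective p ∧
        ∀ N : Submodule HA.Hh (HP π).Vh,
          N ⊔ LinearMap.ker p = ⊤ → N = ⊤) := by
  have hclass : ∀ (N : Type) [AddCommGroup N] [Module HA.Hh N], IsSimpleModule HA.Hh N →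
      ∃ π, Nonempty (N ≃ₗ[HA.Hh] (HL π).Vh) := by
    intro N _ _ hN
    obtain ⟨u, hu, hS⟩ := GCompl.exists_simple_gann hlaur hN
    obtain ⟨π, d, ⟨e⟩⟩ := hcomplete _ hS
    exact ⟨π, GCompl.equiv_of_giso hN (HL π) (hsimple π) hu e⟩
  refine ⟨fun π => GCompl.simple_hat (HL π) (hsimple π), hclass, ?_, fun π => ?_⟩
  · rintro π σ ⟨e⟩
    obtain ⟨d, h⟩ := GCompl.giso_of_hat_equiv (HL π) (HL σ) (hsimple π) (hsimple σ) e
    exact hirred π σ d h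
  · refine ⟨GCompl.hat_projective (HP π) (hproj π), ?_⟩
    obtain ⟨p, hp, hess⟩ := hcover π
    have hp0 : p.1 ∈ ghomSet (P π) (L π) 0 := fun i x hx => by
      rw [add_zero]; exact p.2 i x hx
    refine ⟨GCompl.hatMap (HP π) (HL π) p.1 hp0,
      GCompl.hatMap_surjective (HP π) (HL π) hp0 hp, fun N hN => ?_⟩
    refine GCompl.hat_essential (HP π) (HL π) (hproj π) p hess hp0 (fun S _ _ hS => ?_) N hN
    obtain ⟨σ, hσ⟩ := hclass S hS
    exact ⟨L σ, HL σ, hsimple σ, hσ⟩
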